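/- Let n ≥ 6 and let G be a connected simple graph on n vertices such that the multiplicity of the largest distance Laplacian eigenvalue of G equals n−3. Then none of the following three graphs is an induced subgraph of G: the 5-cycle C_5; the graph J_2 obtained from the 5-cycle v_1v_2v_3v_4u by adding the chord v_2u; the graph J_3 obtained from the 5-cycle v_1v_2v_3v_4u by adding the chords v_2u and v_3u. -/

import Mathlib

open Matrix

/-- The distance Laplacian matrix of a graph: diagonal entries are the transmissions
`Tr(v) = ∑ u, d(v,u)`, off-diagonal entries are `-d(u,v)`. -/
noncomputable def distLaplacian {V : Type*} [Fintype V] [DecidableEq V]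
    (G : SimpleGraph V) : Matrix V V ℝ :=
  Matrix.of fun i j => if i = j then ∑ k : V, (G.dist i k : ℝ) else -(G.dist i j : ℝ)

/-- The multiplicity of `μ` as an eigenvalue of `M`, i.e. the dimension of the
corresponding eigenspace. -/
noncomputable def eigMult {V : Type*} [Fintype V] (M : Matrix V V ℝ) (μ : ℝ) : ℕ :=
  Module.finrank ℝ (Module.End.eigenspace M.mulVecLin μ)

/-- The largest eigenvalue of a matrix. -/
noncomputable def lambdaMax {V : Type*} [Fintype V] (M : Matrix V V ℝ) : ℝ :=
  sSup {μ : ℝ | Module.End.HasEigenvalue M.mulVecLin μ}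

/-- The transmission of a vertex. -/
noncomputable def transmission {V : Type*} [Fintype V] (G : SimpleGraph V) (v : V) : ℕ :=
  ∑ u : V, G.dist v u

/-- The $5$-cycle `v₁v₂v₃v₄u` on `Fin 5` (with `u = 4`). -/
def C5 : SimpleGraph (Fin 5) :=
  SimpleGraph.fromEdgeSet {s(0, 1), s(1, 2), s(2, 3), s(3, 4), s(4, 0)}

/-- `J₂`: the $5$-cycle `v₁v₂v₃v₄u` plus the chord `v₂u`. -/
def J2 : SimpleGraph (Fin 5) :=
  SimpleGraph.fromEdgeSet {s(0, 1), s(1, 2), s(2, 3), s(3, 4), s(4, 0), s(1, 4)}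

/-- `J₃`: the $5$-cycle `v₁v₂v₃v₄u` plus the chords `v₂u` and `v₃u`. -/
def J3 : SimpleGraph (Fin 5) :=
  SimpleGraph.fromEdgeSet {s(0, 1), s(1, 2), s(2, 3), s(3, 4), s(4, 0), s(1, 4), s(2, 4)}

/-! Let `λ` be the largest eigenvalue of the distance Laplacian `L`, let `J` be the all-ones matrix
and `τ = λ / n`. Since `L` annihilates the constant vectors, `N = λ I - L - τ J` is positive
semidefinite, and its kernel contains both the `λ`-eigenspace and the constants. Multiplicity
`n - 3` therefore makes every `3 × 3` minor of `N` vanish. Off the diagonal `N` has the entries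
`d(i, j) - τ`, and `τ > 1` as soon as two vertices are non-adjacent, because then some diagonal
entry of `L` is at least `n`.

The three graphs have diameter two, so on an induced copy of one of them the off-diagonal entries of
`N` are `1 - τ` and `2 - τ`. For `J₂` some minor equals `1 - τ ≠ 0`; for `J₃` some minor is a
nonzero multiple of `y - (1 - τ)`, where `y ≥ 0` is a diagonal entry. For `C₅` the minors make every
column of `N` sum to zero over the cycle: a column of the cycle gives `5τ² - 15τ + 11 = 0`, whereas
a column outside it makes `5τ` an integer `P`, so that `P² - 15P + 55 = 0`, which fails
modulo `2`. -/

theorem det_submatrix_eq_zero_of_rank_lt {m n ι R : Type*} [Fintype n] [Fintype ι] [DecidableEq ι]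
    [CommRing R] [IsDomain R] {A : Matrix m n R} (hA : A.rank < Fintype.card ι)
    (r : ι → m) (s : ι → n) : (A.submatrix r s).det = 0 := by
  by_contra hdet
  exact (A.rank_submatrix_le r s).not_gt (rank_of_det_ne_zero hdet ▸ hA)

theorem three_by_three_minor_eq_zero_of_rank_lt_three {m n R : Type*} [Fintype n] [CommRing R]
    [IsDomain R] {A : Matrix m n R} (hA : A.rank < 3) {r : Fin 3 → m} {s : Fin 3 → n}
    {a b c d e f g h i : R} (hminor : A.submatrix r s = !![a, b, c; d, e, f; g, h, i]) :
    a * e * i - a * f * h - b * d * i + b * f * g + c * d * h - c * e * g = 0 := by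
  have hdet := det_submatrix_eq_zero_of_rank_lt (ι := Fin 3) hA r s
  rwa [hminor, det_fin_three] at hdet

section Deflation

variable {V : Type*} [Fintype V]

theorem one_vecMul_eq_zero_of_isHermitian {M : Matrix V V ℝ} (hM : M.IsHermitian)
    (hone : M *ᵥ 1 = 0) : 1 ᵥ* M = 0 := by
  rw [← hM.eq, conjTranspose_eq_transpose_of_trivial, vecMul_transpose, hone]

variable [DecidableEq V]

theorem posSemidef_lambdaMax_smul_one_sub {M : Matrix V V ℝ} (hM : M.IsHermitian) :
    (lambdaMax M • (1 : Matrix V V ℝ) - M).PosSemidef := by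
  rw [posSemidef_iff_isHermitian_and_spectrum_nonneg]
  refine ⟨(isHermitian_one.smul (IsSelfAdjoint.all _)).sub hM, ?_⟩
  rw [← Algebra.algebraMap_eq_smul_one, ← spectrum.singleton_sub_eq]
  rintro _ ⟨_, rfl, μ, hμ, rfl⟩
  rw [← spectrum_toLin', ← Module.End.hasEigenvalue_iff_mem_spectrum] at hμ
  exact sub_nonneg.mpr (le_csSup (Module.End.finite_hasEigenvalue M.mulVecLin).bddAbove hμ)

/-- The matrix `μ I - M - (μ / n) J`, where `J` is the all-ones matrix of order `n`. When `M`
annihilates the constant vectors, this is `μ I - M` with its eigenvalue `μ` on the constants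
replaced by `0`. -/
noncomputable def deflation (M : Matrix V V ℝ) (μ : ℝ) : Matrix V V ℝ :=
  μ • (1 : Matrix V V ℝ) - M - (μ / Fintype.card V) • vecMulVec 1 1

theorem deflation_apply_self (M : Matrix V V ℝ) (μ : ℝ) (i : V) :
    deflation M μ i i = μ - M i i - μ / Fintype.card V := by
  simp [deflation]

theorem deflation_apply_of_ne (M : Matrix V V ℝ) (μ : ℝ) {i j : V} (hij : i ≠ j) :
    deflation M μ i j = -M i j - μ / Fintype.card V := by
  simp [deflation, hij]

theorem deflation_mulVec (M : Matrix V V ℝ) (μ : ℝ) (x : V → ℝ) :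
    deflation M μ *ᵥ x = μ • x - M *ᵥ x - (μ / Fintype.card V * (1 ⬝ᵥ x)) • 1 := by
  rw [deflation, sub_mulVec, sub_mulVec, smul_mulVec, one_mulVec, smul_mulVec, vecMulVec_mulVec,
    op_smul_eq_smul, smul_smul]

theorem deflation_mulVec_one [Nonempty V] {M : Matrix V V ℝ} (hM : M *ᵥ 1 = 0) (μ : ℝ) :
    deflation M μ *ᵥ 1 = 0 := by
  have hcard : (Fintype.card V : ℝ) ≠ 0 := by simp
  rw [deflation_mulVec, hM, one_dotProduct_one, div_mul_cancel₀ _ hcard, sub_zero, sub_self]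

theorem posSemidef_deflation_lambdaMax [Nonempty V] {M : Matrix V V ℝ} (hM : M.IsHermitian)
    (hone : M *ᵥ 1 = 0) : (deflation M (lambdaMax M)).PosSemidef := by
  let μ := lambdaMax M
  let c : ℝ := Fintype.card V
  let J : Matrix V V ℝ := vecMulVec 1 1
  let P : Matrix V V ℝ := 1 - c⁻¹ • J
  have hc : c ≠ 0 := by simp [c]
  have hdefl : deflation M μ = μ • (1 : Matrix V V ℝ) - M - (μ / c) • J := rfl
  have hJJ : J * J = c • J := by
    rw [vecMulVec_mul_vecMulVec, one_dotProduct_one, vecMulVec_smul]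
  have hMJ : M * J = 0 := by rw [mul_vecMulVec, hone, zero_vecMulVec]
  have hJM : J * M = 0 := by
    rw [vecMulVec_mul, one_vecMul_eq_zero_of_isHermitian hM hone, vecMulVec_zero]
  have hP : Pᴴ = P := by ext; simp [P, J, one_apply, eq_comm]
  have hright : (μ • (1 : Matrix V V ℝ) - M) * P = deflation M μ := by
    simp [P, hdefl, mul_sub, sub_mul, hMJ, smul_smul, div_eq_inv_mul]
  have hJ : J * deflation M μ = 0 := by
    simp [hdefl, mul_sub, hJM, hJJ, smul_smul, hc]
  have hleft : Pᴴ * deflation M μ = deflation M μ := by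
    rw [hP, sub_mul, one_mul, smul_mul_assoc, hJ, smul_zero, sub_zero]
  rw [← hleft, ← hright, ← mul_assoc]
  exact (posSemidef_lambdaMax_smul_one_sub hM).conjTranspose_mul_mul_same P

theorem rank_deflation_add_eigMult_lt_card [Nonempty V] {M : Matrix V V ℝ} {μ : ℝ} (hμ : μ ≠ 0)
    (hM : M *ᵥ 1 = 0) (hM' : 1 ᵥ* M = 0) :
    (deflation M μ).rank + eigMult M μ < Fintype.card V := by
  have hlt : Module.End.eigenspace M.mulVecLin μ < LinearMap.ker (deflation M μ).mulVecLin := by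
    refine SetLike.lt_iff_le_and_exists.mpr ⟨fun x hx ↦ ?_, 1, deflation_mulVec_one hM μ, ?_⟩
    · have hMx : M *ᵥ x = μ • x := Module.End.mem_eigenspace_iff.mp hx
      have horth : 1 ⬝ᵥ x = 0 := by
        have h : μ * (1 ⬝ᵥ x) = 0 := by
          rw [← smul_eq_mul, ← dotProduct_smul, ← hMx, dotProduct_mulVec, hM', zero_dotProduct]
        exact (mul_eq_zero.mp h).resolve_left hμ
      simp [deflation_mulVec, hMx, horth]
    · rw [Module.End.mem_eigenspace_iff, mulVecLin_apply, hM]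
      exact (smul_ne_zero hμ one_ne_zero).symm
  have hker := Submodule.finrank_lt_finrank_of_lt hlt
  have hrank := (deflation M μ).mulVecLin.finrank_range_add_finrank_ker
  rw [Module.finrank_fintype_fun_eq_card] at hrank
  rw [Matrix.rank, eigMult]
  lia

end Deflation

section DistLaplacian

variable {V : Type*} [Fintype V] {G : SimpleGraph V}

theorem card_le_transmission_of_not_adj (hG : G.Connected) {a b : V} (hab : a ≠ b)
    (hadj : ¬G.Adj a b) : Fintype.card V ≤ transmission G a := by
  classical
  have hlt : ∑ _u ∈ Finset.univ.erase a, 1 < ∑ u ∈ Finset.univ.erase a, G.dist a u :=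
    Finset.sum_lt_sum (fun u hu ↦ hG.pos_dist_of_ne (Finset.ne_of_mem_erase hu).symm)
      ⟨b, by simpa using hab.symm, hG.one_lt_dist_of_ne_of_not_adj hab hadj⟩
  rw [Finset.sum_erase _ SimpleGraph.dist_self, ← transmission] at hlt
  simp only [Finset.sum_const, Finset.mem_univ, Finset.card_erase_of_mem, Finset.card_univ,
    smul_eq_mul, mul_one] at hlt
  lia

variable [DecidableEq V]

theorem distLaplacian_apply_self (G : SimpleGraph V) (i : V) :
    distLaplacian G i i = transmission G i := by
  simp [distLaplacian, transmission]

theorem distLaplacian_apply_of_ne (G : SimpleGraph V) {i j : V} (hij : i ≠ j) :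
    distLaplacian G i j = -G.dist i j := by
  simp [distLaplacian, hij]

theorem distLaplacian_eq_diagonal_sub (G : SimpleGraph V) :
    distLaplacian G =
      diagonal (fun i ↦ (transmission G i : ℝ)) - of fun i j ↦ (G.dist i j : ℝ) := by
  ext i j
  obtain rfl | hij := eq_or_ne i j
  · simp [distLaplacian_apply_self]
  · simp [distLaplacian_apply_of_ne G hij, hij]

theorem isHermitian_distLaplacian (G : SimpleGraph V) : (distLaplacian G).IsHermitian := by
  rw [distLaplacian_eq_diagonal_sub]
  refine (isHermitian_diagonal _).sub ?_
  ext i j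
  simp [G.dist_comm]

theorem distLaplacian_mulVec_one (G : SimpleGraph V) : distLaplacian G *ᵥ 1 = 0 := by
  ext i
  rw [distLaplacian_eq_diagonal_sub, sub_mulVec, Pi.sub_apply, mulVec_diagonal]
  simp [mulVec, dotProduct, transmission]

theorem deflation_distLaplacian_apply_of_ne (G : SimpleGraph V) (μ : ℝ) {i j : V} (hij : i ≠ j) :
    deflation (distLaplacian G) μ i j = G.dist i j - μ / Fintype.card V := by
  rw [deflation_apply_of_ne _ _ hij, distLaplacian_apply_of_ne G hij, neg_neg]

theorem one_lt_lambdaMax_div_card_of_not_adj (hG : G.Connected) {a b : V} (hab : a ≠ b)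
    (hadj : ¬G.Adj a b) : 1 < lambdaMax (distLaplacian G) / Fintype.card V := by
  have := hG.nonempty
  have hdiag := (posSemidef_deflation_lambdaMax (isHermitian_distLaplacian G)
    (distLaplacian_mulVec_one G)).diag_nonneg (i := a)
  rw [deflation_apply_self, distLaplacian_apply_self] at hdiag
  have htr : (Fintype.card V : ℝ) ≤ transmission G a :=
    mod_cast card_le_transmission_of_not_adj hG hab hadj
  have hcard : (1 : ℝ) ≤ Fintype.card V := mod_cast Fintype.card_pos
  set τ := lambdaMax (distLaplacian G) / Fintype.card V
  have hμ : lambdaMax (distLaplacian G) = τ * Fintype.card V := by simp [τ]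
  have hprod : 1 ≤ (Fintype.card V - 1) * (τ - 1) := by linarith
  by_contra! hτ
  linarith [hprod, mul_nonpos_of_nonneg_of_nonpos (sub_nonneg.mpr hcard) (sub_nonpos.mpr hτ)]

end DistLaplacian

section InducedSubgraphs

variable {V W : Type*} {G : SimpleGraph V} {H : SimpleGraph W}

theorem dist_eq_two_of_commonNeighbors_nonempty {u v : V} (huv : u ≠ v) (hadj : ¬G.Adj u v)
    (hcommon : (G.commonNeighbors u v).Nonempty) : G.dist u v = 2 := by
  rw [SimpleGraph.dist, SimpleGraph.edist_eq_two_iff.mpr ⟨huv, hadj, hcommon⟩]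
  rfl

theorem isEmpty_embedding_top_of_not_adj {i j : W} (hij : i ≠ j) (hadj : ¬H.Adj i j) :
    IsEmpty (H ↪g (⊤ : SimpleGraph V)) :=
  ⟨fun f ↦ hadj (f.map_adj_iff.mp (f.injective.ne hij))⟩

theorem dist_map_of_commonNeighbors_nonempty [DecidableRel H.Adj] (f : H ↪g G)
    (hH : ∀ i j, i ≠ j → ¬H.Adj i j → (H.commonNeighbors i j).Nonempty) {i j : W} (hij : i ≠ j) :
    G.dist (f i) (f j) = if H.Adj i j then 1 else 2 := by
  split_ifs with hadj
  · exact SimpleGraph.dist_eq_one_iff_adj.mpr (f.map_adj_iff.mpr hadj)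
  · obtain ⟨k, hik, hjk⟩ := hH i j hij hadj
    exact dist_eq_two_of_commonNeighbors_nonempty (f.injective.ne hij)
      (mt f.map_adj_iff.mp hadj) ⟨f k, f.map_adj_iff.mpr hik, f.map_adj_iff.mpr hjk⟩

instance : DecidableRel C5.Adj := inferInstanceAs (DecidableRel (SimpleGraph.fromEdgeSet _).Adj)

instance : DecidableRel J2.Adj := inferInstanceAs (DecidableRel (SimpleGraph.fromEdgeSet _).Adj)

instance : DecidableRel J3.Adj := inferInstanceAs (DecidableRel (SimpleGraph.fromEdgeSet _).Adj)

theorem commonNeighbors_C5_nonempty :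
    ∀ i j, i ≠ j → ¬C5.Adj i j → (C5.commonNeighbors i j).Nonempty := by
  unfold Set.Nonempty
  decide

theorem commonNeighbors_J2_nonempty :
    ∀ i j, i ≠ j → ¬J2.Adj i j → (J2.commonNeighbors i j).Nonempty := by
  unfold Set.Nonempty
  decide

theorem commonNeighbors_J3_nonempty :
    ∀ i j, i ≠ j → ¬J3.Adj i j → (J3.commonNeighbors i j).Nonempty := by
  unfold Set.Nonempty
  decide

end InducedSubgraphs

section RankTwo

variable {V : Type*} {G : SimpleGraph V} {N : Matrix V V ℝ} {τ : ℝ}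

theorem apply_map_of_commonNeighbors_nonempty {W : Type*} {H : SimpleGraph W} [DecidableRel H.Adj]
    (hN : ∀ i j, i ≠ j → N i j = G.dist i j - τ) (f : H ↪g G)
    (hH : ∀ i j, i ≠ j → ¬H.Adj i j → (H.commonNeighbors i j).Nonempty) (i j : W) (hij : i ≠ j) :
    N (f i) (f j) = if H.Adj i j then 1 - τ else 2 - τ := by
  rw [hN _ _ (f.injective.ne hij), dist_map_of_commonNeighbors_nonempty f hH hij]
  split_ifs <;> simp

variable [Fintype V]

theorem isEmpty_J2_embedding_of_rank_lt_three (hrank : N.rank < 3)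
    (hN : ∀ i j, i ≠ j → N i j = G.dist i j - τ) (hτ : τ ≠ 1) : IsEmpty (J2 ↪g G) := by
  refine ⟨fun f ↦ hτ ?_⟩
  have hentry := apply_map_of_commonNeighbors_nonempty hN f commonNeighbors_J2_nonempty
  have hminor : N.submatrix ![f 0, f 1, f 3] ![f 0, f 2, f 4] =
      !![N (f 0) (f 0), 2 - τ, 1 - τ; 1 - τ, 1 - τ, 1 - τ; 2 - τ, 1 - τ, 1 - τ] := by
    ext i j
    fin_cases i <;> fin_cases j <;> simp +decide [hentry]
  have hdet := three_by_three_minor_eq_zero_of_rank_lt_three hrank hminor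
  linear_combination -hdet

theorem isEmpty_J3_embedding_of_rank_lt_three (hrank : N.rank < 3)
    (hN : ∀ i j, i ≠ j → N i j = G.dist i j - τ) (hdiag : ∀ i, 0 ≤ N i i) (hτ : 1 < τ) :
    IsEmpty (J3 ↪g G) := by
  refine ⟨fun f ↦ ?_⟩
  have hentry := apply_map_of_commonNeighbors_nonempty hN f commonNeighbors_J3_nonempty
  have hminor : N.submatrix ![f 4, f 0, f 2] ![f 4, f 1, f 3] =
      !![N (f 4) (f 4), 1 - τ, 1 - τ; 1 - τ, 1 - τ, 2 - τ; 1 - τ, 1 - τ, 1 - τ] := by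
    ext i j
    fin_cases i <;> fin_cases j <;> simp +decide [hentry]
  have hdet := three_by_three_minor_eq_zero_of_rank_lt_three hrank hminor
  have hprod : (τ - 1) * (N (f 4) (f 4) + (τ - 1)) = 0 := by linear_combination hdet
  exact (mul_pos (by linarith) (by linarith [hdiag (f 4)])).ne' hprod

theorem C5_column_recurrence_of_rank_lt_three (hrank : N.rank < 3)
    (hN : ∀ i j, i ≠ j → N i j = G.dist i j - τ) (f : C5 ↪g G) (v : V) (i : Fin 5) :
    (2 - τ) * (N (f i) v + N (f (i + 2)) v) = (3 - 2 * τ) * N (f (i + 1)) v := by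
  have hentry := apply_map_of_commonNeighbors_nonempty hN f commonNeighbors_C5_nonempty
  have hminor : N.submatrix ![f i, f (i + 1), f (i + 2)] ![v, f (i + 3), f (i + 4)] =
      !![N (f i) v, 2 - τ, 1 - τ; N (f (i + 1)) v, 2 - τ, 2 - τ;
        N (f (i + 2)) v, 1 - τ, 2 - τ] := by
    ext k l
    fin_cases k <;> fin_cases l <;> fin_cases i <;> simp +decide [hentry]
  have hdet := three_by_three_minor_eq_zero_of_rank_lt_three hrank hminor
  linear_combination hdet

theorem C5_column_sum_eq_zero_of_rank_lt_three (hrank : N.rank < 3)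
    (hN : ∀ i j, i ≠ j → N i j = G.dist i j - τ) (f : C5 ↪g G) (v : V) :
    ∑ i, N (f i) v = 0 := by
  have hrec (i : Fin 5) := C5_column_recurrence_of_rank_lt_three hrank hN f v i
  have hshift (k : Fin 5) : ∑ i, N (f (i + k)) v = ∑ i, N (f i) v :=
    Equiv.sum_comp (Equiv.addRight k) fun i ↦ N (f i) v
  have hsum := Finset.sum_congr rfl fun i (_ : i ∈ Finset.univ) ↦ hrec i
  simp only [← Finset.mul_sum, Finset.sum_add_distrib, hshift] at hsum
  linear_combination hsum

theorem quadratic_eq_zero_of_C5_embedding_of_rank_lt_three (hrank : N.rank < 3)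
    (hN : ∀ i j, i ≠ j → N i j = G.dist i j - τ) (f : C5 ↪g G) : 5 * τ ^ 2 - 15 * τ + 11 = 0 := by
  have hentry := apply_map_of_commonNeighbors_nonempty hN f commonNeighbors_C5_nonempty
  have hsum : N (f 0) (f 0) + (1 - τ) + (2 - τ) + (2 - τ) + (1 - τ) = 0 := by
    simpa +decide [Fin.sum_univ_five, hentry] using
      C5_column_sum_eq_zero_of_rank_lt_three hrank hN f (f 0)
  have hrec : (2 - τ) * (N (f 0) (f 0) + (2 - τ)) = (3 - 2 * τ) * (1 - τ) := by
    simpa +decide [hentry] using C5_column_recurrence_of_rank_lt_three hrank hN f (f 0) 0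
  linear_combination (2 - τ) * hsum - hrec

theorem isEmpty_C5_embedding_of_rank_lt_three (hcard : 5 < Fintype.card V) (hrank : N.rank < 3)
    (hN : ∀ i j, i ≠ j → N i j = G.dist i j - τ) : IsEmpty (C5 ↪g G) := by
  refine ⟨fun f ↦ ?_⟩
  obtain ⟨w, hw⟩ : ∃ w, ∀ i, f i ≠ w := by
    by_contra! hsurj
    exact (Fintype.card_le_of_surjective f hsurj).not_gt (by simpa)
  let P : ℕ := ∑ i, G.dist (f i) w
  have hP : 5 * τ = P := by
    have hsum := C5_column_sum_eq_zero_of_rank_lt_three hrank hN f w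
    simp only [hN _ _ (hw _), Finset.sum_sub_distrib, Finset.sum_const, Finset.card_univ,
      Fintype.card_fin, nsmul_eq_mul, Nat.cast_ofNat] at hsum
    push_cast [P]
    linear_combination -hsum
  have hquad : (P : ℤ) ^ 2 - 15 * P + 55 = 0 := by
    have hτ := quadratic_eq_zero_of_C5_embedding_of_rank_lt_three hrank hN f
    have : (P : ℝ) ^ 2 - 15 * P + 55 = 0 := by
      rw [← hP]
      linear_combination 5 * hτ
    exact_mod_cast this
  have hodd : ∀ x : ZMod 2, x ^ 2 - 15 * x + 55 ≠ 0 := by decide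
  exact hodd P (by exact_mod_cast congrArg (Int.cast : ℤ → ZMod 2) hquad)

end RankTwo

theorem no_induced_C5_J2_J3_of_multiplicity_eq_sub_three_general
    {V : Type*} [Fintype V] [DecidableEq V] (hV : 6 ≤ Fintype.card V) (G : SimpleGraph V)
    (hG : G.Connected)
    (hmult : Fintype.card V ≤ eigMult (distLaplacian G) (lambdaMax (distLaplacian G)) + 3) :
    IsEmpty (C5 ↪g G) ∧ IsEmpty (J2 ↪g G) ∧ IsEmpty (J3 ↪g G) := by
  obtain rfl | hne := eq_or_ne G ⊤
  · refine ⟨?_, ?_, ?_⟩ <;>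
      exact isEmpty_embedding_top_of_not_adj (i := 0) (j := 2) (by decide) (by decide)
  have := hG.nonempty
  obtain ⟨a, b, hab, hadj⟩ := SimpleGraph.ne_top_iff_exists_not_adj.mp hne
  let L := distLaplacian G
  let μ := lambdaMax L
  let τ := μ / Fintype.card V
  have hsymm : L.IsHermitian := isHermitian_distLaplacian G
  have hone : L *ᵥ 1 = 0 := distLaplacian_mulVec_one G
  have hτ : 1 < τ := one_lt_lambdaMax_div_card_of_not_adj hG hab hadj
  have hμ : μ ≠ 0 := fun h ↦ by norm_num [τ, h] at hτ
  have hrank : (deflation L μ).rank < 3 := by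
    have := rank_deflation_add_eigMult_lt_card hμ hone
      (one_vecMul_eq_zero_of_isHermitian hsymm hone)
    lia
  have hoff (i j : V) : i ≠ j → deflation L μ i j = G.dist i j - τ :=
    deflation_distLaplacian_apply_of_ne G μ
  have hdiag (i : V) : 0 ≤ deflation L μ i i :=
    (posSemidef_deflation_lambdaMax hsymm hone).diag_nonneg
  exact ⟨isEmpty_C5_embedding_of_rank_lt_three hV hrank hoff,
    isEmpty_J2_embedding_of_rank_lt_three hrank hoff hτ.ne',
    isEmpty_J3_embedding_of_rank_lt_three hrank hoff hdiag hτ⟩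

/-- If `G` is a connected graph on `n ≥ 6` vertices whose largest distance
Laplacian eigenvalue has multiplicity `n - 3`, then none of `C₅`, `J₂`, `J₃` is an induced
subgraph of `G`. -/
theorem no_induced_C5_J2_J3_of_multiplicity_eq_sub_three
    (n : ℕ) (hn : 6 ≤ n) (G : SimpleGraph (Fin n)) (hG : G.Connected)
    (hmult : eigMult (distLaplacian G) (lambdaMax (distLaplacian G)) = n - 3) :
    IsEmpty (C5 ↪g G) ∧ IsEmpty (J2 ↪g G) ∧ IsEmpty (J3 ↪g G) := by
  exact no_induced_C5_J2_J3_of_multiplicity_eq_sub_three_general (by simpa) G hG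
    (by simp only [Fintype.card_fin]; lia)
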